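/- arXiv:2511.17121 — 2 statements merged into one kernel-verified Lean document; each statement's English description precedes it below -/
import Mathlib

section
/- Existence and uniqueness for the coupled Riccati system: for any coefficient datum (A, B, C, Q, R, m, P) as described, the coupled Riccati terminal value problem admits a solution K on [0,T], and the solution is unique: if K and K' both take symmetric values, are differentiable in t, satisfy the Riccati equations −K̇(t,i) = C(i)ᵀK(t,i)C(i) + A(i)ᵀK(t,i) + K(t,i)A(i) − K(t,i)B(i)R(i)⁻¹B(i)ᵀK(t,i) + Q(i) + Σ_{j∈S} m_{ij}K(t,j) on [0,T] for every i ∈ S, and satisfy K(T,i) = K'(T,i) = P(i), then K(t,i) = K'(t,i) for all t ∈ [0,T] and i ∈ S. -/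
open Matrix Set Filter Topology

attribute [local instance] Matrix.normedAddCommGroup Matrix.normedSpace

noncomputable section

/-- Right-hand side of the coupled Riccati system associated with a coefficient
datum `(A, B, C, Q, R, m)`, evaluated at the tuple of matrices `K : Fin N → Matrix`. -/
def riccatiRHS {d l N : ℕ}
    (A C : Fin N → Matrix (Fin d) (Fin d) ℝ)
    (B : Fin N → Matrix (Fin d) (Fin l) ℝ)
    (Q : Fin N → Matrix (Fin d) (Fin d) ℝ)
    (R : Fin N → Matrix (Fin l) (Fin l) ℝ)
    (m : Fin N → Fin N → ℝ)
    (K : Fin N → Matrix (Fin d) (Fin d) ℝ) (i : Fin N) :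
    Matrix (Fin d) (Fin d) ℝ :=
  (C i)ᵀ * K i * C i + (A i)ᵀ * K i + K i * A i
    - K i * B i * (R i)⁻¹ * (B i)ᵀ * K i + Q i + ∑ j, m i j • K j

/-- `K : ℝ → Fin N → Matrix` is a solution on `[0,T]` of the coupled Riccati
terminal value problem: it takes symmetric values, is differentiable in `t` with
`−K̇(t,i)` equal to the Riccati right-hand side, and satisfies `K(T,i) = P i`. -/
def IsRiccatiSolution {d l N : ℕ} (T : ℝ)
    (A C : Fin N → Matrix (Fin d) (Fin d) ℝ)
    (B : Fin N → Matrix (Fin d) (Fin l) ℝ)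
    (Q : Fin N → Matrix (Fin d) (Fin d) ℝ)
    (R : Fin N → Matrix (Fin l) (Fin l) ℝ)
    (m : Fin N → Fin N → ℝ)
    (P : Fin N → Matrix (Fin d) (Fin d) ℝ)
    (K : ℝ → Fin N → Matrix (Fin d) (Fin d) ℝ) : Prop :=
  (∀ t ∈ Icc (0:ℝ) T, ∀ i, (K t i).IsSymm) ∧
  (∀ t ∈ Icc (0:ℝ) T, ∀ i,
    HasDerivWithinAt (fun s => K s i)
      (-(riccatiRHS A C B Q R m (K t) i)) (Icc (0:ℝ) T) t) ∧
  (∀ i, K T i = P i)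

/-!
Run backwards in time, the equation is an autonomous ODE `x' = F x` with a polynomial field. For
symmetric `x` the field has the form `F x i = Dᵀ x i + x i D + S`, where `D` depends on `x` and the
source `S` is positive semidefinite whenever all `x j` are, because the off-diagonal transition
rates are nonnegative. To first order in `h` the point `x + h F x` therefore agrees with
`(1 + h D)ᵀ x (1 + h D) + h S`, so `F` is tangent to the closed cone of positive semidefinite
tuples, and Nagumo's theorem makes that cone invariant; symmetry comes with it. On the cone the
quadratic term only lowers the sum of the traces, which thus grows at most affinely along `F`; since
it dominates the norm there, Grönwall's inequality excludes blow-up. As `F` is only locally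
Lipschitz, the argument is applied to `φ F` for a smooth cutoff `φ` equal to `1` on the ball given
by the Grönwall bound. Uniqueness holds because `F` is locally Lipschitz.
-/

section Viability

variable {E : Type*} [NormedAddCommGroup E] [NormedSpace ℝ E]

/-- Right tangent vectors of a set `s` at `p`: the initial velocities of curves that start at `p`
and remain in `s`. Nagumo's condition is usually stated with the larger contingent cone
`posTangentConeAt s p`; with curves at hand, tangency is stable under slowing down a vector field
and no sequences of step sizes are needed. -/
def IsRightTangentAt (s : Set E) (p y : E) : Prop :=
  ∃ γ : ℝ → E, γ 0 = p ∧ MapsTo γ (Ici 0) s ∧ HasDerivWithinAt γ y (Ici 0) 0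

theorem IsRightTangentAt.smul {s : Set E} {p y : E} (h : IsRightTangentAt s p y) {c : ℝ}
    (hc : 0 ≤ c) : IsRightTangentAt s p (c • y) := by
  obtain ⟨γ, rfl, hγs, hγ⟩ := h
  have hmaps : MapsTo (fun t => c * t) (Ici 0) (Ici 0) := fun t ht => mul_nonneg hc ht
  have hscale : HasDerivWithinAt (fun t : ℝ => c * t) c (Ici 0) 0 := by
    simpa using (hasDerivWithinAt_id (0 : ℝ) (Ici 0)).const_mul c
  refine ⟨fun t => γ (c * t), by simp, hγs.comp hmaps, ?_⟩
  exact HasDerivWithinAt.scomp_of_eq 0 hγ hscale hmaps (by simp)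

theorem hasDerivAt_add_smul_add_sq_smul (p y w : E) :
    HasDerivAt (fun h : ℝ => p + h • y + h ^ 2 • w) y 0 := by
  have hlin : HasDerivAt (fun h : ℝ => h • y) y 0 := by
    simpa using (hasDerivAt_id (0 : ℝ)).smul_const y
  have hquad : HasDerivAt (fun h : ℝ => h ^ 2 • w) 0 0 := by
    simpa using (hasDerivAt_pow 2 (0 : ℝ)).smul_const w
  simpa using (hlin.const_add p).fun_add hquad

/-- **Nagumo's invariance theorem** for Lipschitz vector fields. -/
theorem mem_of_forall_isRightTangentAt [ProperSpace E] {s : Set E} (hs : IsClosed s) {F : E → E}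
    {k : NNReal} (hF : LipschitzWith k F) (htan : ∀ p ∈ s, IsRightTangentAt s p (F p))
    {x : ℝ → E} {a b : ℝ} (hxc : ContinuousOn x (Icc a b))
    (hx : ∀ t ∈ Ico a b, HasDerivWithinAt x (F (x t)) (Ici t) t) (ha : x a ∈ s)
    {t : ℝ} (ht : t ∈ Icc a b) : x t ∈ s := by
  have hne : s.Nonempty := ⟨x a, ha⟩
  -- Near time `t`, compare `x` with a curve in `s` through the point of `s` nearest to `x t`.
  have hslope : ∀ t ∈ Ico a b, ∀ r, k * Metric.infDist (x t) s < r →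
      ∃ᶠ z in 𝓝[>] t, (z - t)⁻¹ * (Metric.infDist (x z) s - Metric.infDist (x t) s) < r := by
    intro t ht r hr
    obtain ⟨p, hp, hdist⟩ := hs.exists_infDist_eq_dist hne (x t)
    obtain ⟨γ, hγ0, hγs, hγ⟩ := htan p hp
    have hγt : HasDerivWithinAt (fun z => γ (z - t)) (F p) (Ici t) t := by
      simpa [Function.comp_def] using HasDerivWithinAt.scomp_of_eq t hγ
        ((hasDerivWithinAt_id t (Ici t)).sub_const t) (fun z hz => mem_Ici.2 (sub_nonneg.2 hz))
        (by simp)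
    have hnorm : ‖F (x t) - F p‖ < r := by
      rw [← dist_eq_norm]
      exact (hF.dist_le_mul _ _).trans_lt (hdist ▸ hr)
    refine (((hx t ht).sub hγt).liminf_right_slope_norm_le hnorm).mp ?_
    filter_upwards [self_mem_nhdsWithin] with z hz hlt
    refine lt_of_le_of_lt (mul_le_mul_of_nonneg_left ?_ (inv_nonneg.2 (sub_nonneg.2 hz.le))) hlt
    have hz_le : Metric.infDist (x z) s ≤ dist (x z) (γ (z - t)) :=
      Metric.infDist_le_dist_of_mem (hγs (mem_Ici.2 (sub_nonneg.2 (mem_Ioi.1 hz).le)))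
    simpa [hdist, hγ0, dist_eq_norm] using hz_le
  have hgronwall := le_gronwallBound_of_liminf_deriv_right_le (δ := 0) (K := k) (ε := 0)
    ((Metric.continuous_infDist_pt s).comp_continuousOn hxc) hslope
    (Metric.infDist_zero_of_mem ha).le (fun _ _ => (add_zero _).ge) t ht
  rw [gronwallBound_ε0_δ0] at hgronwall
  exact (hs.mem_iff_infDist_zero hne).2 (hgronwall.antisymm Metric.infDist_nonneg)

end Viability

section ODE

theorem le_gronwallBound_of_hasDerivWithinAt_right {f f' : ℝ → ℝ} {δ K ε a b : ℝ}
    (hf : ContinuousOn f (Icc a b)) (hf' : ∀ t ∈ Ico a b, HasDerivWithinAt f (f' t) (Ici t) t)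
    (ha : f a ≤ δ) (bound : ∀ t ∈ Ico a b, f' t ≤ K * f t + ε) :
    ∀ t ∈ Icc a b, f t ≤ gronwallBound δ K ε (t - a) :=
  le_gronwallBound_of_liminf_deriv_right_le hf
    (fun t ht _ hr => by
      simpa [slope_def_field, div_eq_inv_mul] using (hf' t ht).liminf_right_slope_le hr) ha bound

variable {E : Type*} [NormedAddCommGroup E] [NormedSpace ℝ E]

theorem hasDerivWithinAt_comp_const_sub {x : ℝ → E} {x' : E} {s : Set ℝ} {c t : ℝ}
    (hx : HasDerivWithinAt x x' s (c - t)) :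
    HasDerivWithinAt (fun r => x (c - r)) (-x') ((fun r => c - r) ⁻¹' s) t := by
  have h := hx.scomp t ((hasDerivWithinAt_id t _).const_sub c) (mapsTo_preimage (fun r => c - r) s)
  rwa [neg_one_smul] at h

theorem exists_hasDerivWithinAt_Icc_of_lipschitzWith_of_norm_le [CompleteSpace E] {F : E → E}
    {k L : NNReal} (hF : LipschitzWith k F) (hL : ∀ z, ‖F z‖ ≤ L) {a b : ℝ} (hab : a ≤ b) (x₀ : E) :
    ∃ x : ℝ → E, x a = x₀ ∧ ∀ t ∈ Icc a b, HasDerivWithinAt x (F (x t)) (Icc a b) t := by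
  have hpl : IsPicardLindelof (fun _ => F) (⟨a, left_mem_Icc.2 hab⟩ : Icc a b) x₀
      (L * (b - a).toNNReal) 0 L k :=
    .of_time_independent (fun z _ => hL z) hF.lipschitzOnWith (by simp [hab])
  exact hpl.exists_eq_forall_mem_Icc_hasDerivWithinAt₀

variable [FiniteDimensional ℝ E]

theorem eqOn_Icc_of_hasDerivWithinAt_of_eq_right {F : E → E} (hF : ContDiff ℝ 1 F) {a b : ℝ}
    {x y : ℝ → E} (hx : ∀ t ∈ Icc a b, HasDerivWithinAt x (F (x t)) (Icc a b) t)
    (hy : ∀ t ∈ Icc a b, HasDerivWithinAt y (F (y t)) (Icc a b) t) (hb : x b = y b) :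
    EqOn x y (Icc a b) := by
  have hxc : ContinuousOn x (Icc a b) := HasDerivWithinAt.continuousOn hx
  have hyc : ContinuousOn y (Icc a b) := HasDerivWithinAt.continuousOn hy
  obtain ⟨ρ, hρ⟩ := ((isCompact_Icc.image_of_continuousOn hxc).isBounded.union
    (isCompact_Icc.image_of_continuousOn hyc).isBounded).subset_closedBall 0
  obtain ⟨k, hk⟩ := hF.contDiffOn.exists_lipschitzOnWith one_ne_zero
    (convex_closedBall (0 : E) ρ) (isCompact_closedBall _ _)
  have hleft : ∀ {t}, t ∈ Ioc a b → Icc a b ∈ 𝓝[≤] t := fun ht => Icc_mem_nhdsLE_of_mem ht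
  exact ODE_solution_unique_of_mem_Icc_left (v := fun _ => F) (s := fun _ => Metric.closedBall 0 ρ)
    (fun _ _ => hk) hxc
    (fun t ht => (hx t (Ioc_subset_Icc_self ht)).mono_of_mem_nhdsWithin (hleft ht))
    (fun t ht => hρ (.inl (mem_image_of_mem x (Ioc_subset_Icc_self ht)))) hyc
    (fun t ht => (hy t (Ioc_subset_Icc_self ht)).mono_of_mem_nhdsWithin (hleft ht))
    (fun t ht => hρ (.inr (mem_image_of_mem y (Ioc_subset_Icc_self ht)))) hb

theorem apply_le_gronwallBound_of_hasDerivWithinAt_smul {ℓ : E →ₗ[ℝ] ℝ} {x v : ℝ → E} {θ : ℝ → ℝ}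
    {k q a b : ℝ} (hk : 0 ≤ k) (hq : 0 ≤ q) (hxc : ContinuousOn x (Icc a b))
    (hx : ∀ t ∈ Ico a b, HasDerivWithinAt x (θ t • v t) (Ici t) t)
    (hθ : ∀ t ∈ Ico a b, θ t ∈ Icc (0 : ℝ) 1) (hnonneg : ∀ t ∈ Ico a b, 0 ≤ ℓ (x t))
    (hgrowth : ∀ t ∈ Ico a b, ℓ (v t) ≤ k * ℓ (x t) + q) :
    ∀ t ∈ Icc a b, ℓ (x t) ≤ gronwallBound (ℓ (x a)) k q (t - a) := by
  refine le_gronwallBound_of_hasDerivWithinAt_right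
    (ℓ.continuous_of_finiteDimensional.comp_continuousOn hxc)
    (fun t ht => ℓ.toContinuousLinearMap.hasFDerivAt.comp_hasDerivWithinAt t (hx t ht)) le_rfl
    fun t ht => ?_
  calc ℓ (θ t • v t) = θ t * ℓ (v t) := map_smul ..
    _ ≤ θ t * (k * ℓ (x t) + q) := mul_le_mul_of_nonneg_left (hgrowth t ht) (hθ t ht).1
    _ ≤ k * ℓ (x t) + q :=
      mul_le_of_le_one_left (add_nonneg (mul_nonneg hk (hnonneg t ht)) hq) (hθ t ht).2

/-- Solutions confined to `s` cannot blow up when the functional `ℓ`, which dominates the norm on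
`s`, grows at most affinely along `F`. -/
theorem exists_hasDerivWithinAt_Icc_of_invariant {F : E → E} (hF : ContDiff ℝ 1 F) {s : Set E}
    (hs : IsClosed s) (htan : ∀ p ∈ s, IsRightTangentAt s p (F p)) {ℓ : E →ₗ[ℝ] ℝ}
    (hℓ : ∀ p ∈ s, ‖p‖ ≤ ℓ p) {k q : ℝ} (hk : 0 ≤ k) (hq : 0 ≤ q)
    (hgrowth : ∀ p ∈ s, ℓ (F p) ≤ k * ℓ p + q) {a b : ℝ} (hab : a ≤ b) {x₀ : E} (hx₀ : x₀ ∈ s) :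
    ∃ x : ℝ → E, x a = x₀ ∧ (∀ t ∈ Icc a b, x t ∈ s) ∧
      ∀ t ∈ Icc a b, HasDerivWithinAt x (F (x t)) (Icc a b) t := by
  have hℓ₀ : ∀ p ∈ s, 0 ≤ ℓ p := fun p hp => (norm_nonneg p).trans (hℓ p hp)
  let M : ℝ := gronwallBound (ℓ x₀) k q (b - a)
  let φ : ContDiffBump (0 : E) := ⟨max M 1, max M 1 + 1, by positivity, by simp⟩
  have hG : ContDiff ℝ 1 fun z => φ z • F z := φ.contDiff.smul hF
  have hGs : HasCompactSupport fun z => φ z • F z := φ.hasCompactSupport.smul_right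
  obtain ⟨κ, hκ⟩ := hG.lipschitzWith_of_hasCompactSupport hGs one_ne_zero
  obtain ⟨L, hL⟩ := hGs.exists_bound_of_continuous hG.continuous
  obtain ⟨x, hxa, hx⟩ := exists_hasDerivWithinAt_Icc_of_lipschitzWith_of_norm_le hκ
    (L := L.toNNReal) (fun z => (hL z).trans L.le_coe_toNNReal) hab x₀
  have hxc : ContinuousOn x (Icc a b) := HasDerivWithinAt.continuousOn hx
  have hxr : ∀ t ∈ Ico a b, HasDerivWithinAt x (φ (x t) • F (x t)) (Ici t) t := fun t ht =>
    (hx t (Ico_subset_Icc_self ht)).mono_of_mem_nhdsWithin (Icc_mem_nhdsGE_of_mem ht)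
  have hxs : ∀ t ∈ Icc a b, x t ∈ s := fun t ht => mem_of_forall_isRightTangentAt hs hκ
    (fun p hp => (htan p hp).smul φ.nonneg) hxc hxr (hxa ▸ hx₀) ht
  have hbound : ∀ t ∈ Icc a b, ℓ (x t) ≤ gronwallBound (ℓ x₀) k q (t - a) :=
    hxa ▸ apply_le_gronwallBound_of_hasDerivWithinAt_smul hk hq hxc hxr
      (fun _ _ => ⟨φ.nonneg, φ.le_one⟩)
      (fun t ht => hℓ₀ _ (hxs t (Ico_subset_Icc_self ht)))
      fun t ht => hgrowth _ (hxs t (Ico_subset_Icc_self ht))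
  refine ⟨x, hxa, hxs, fun t ht => ?_⟩
  have hnorm : ‖x t‖ ≤ M := (hℓ _ (hxs t ht)).trans <| (hbound t ht).trans <|
    gronwallBound_mono (hℓ₀ _ hx₀) hq hk (sub_le_sub_right ht.2 a)
  have hφ : φ (x t) = 1 := φ.one_of_mem_closedBall (by simpa [φ] using Or.inl hnorm)
  simpa [hφ] using hx t ht

end ODE

section Matrix

variable {n ι : Type*}

theorem isClosed_setOf_posSemidef [Finite n] : IsClosed {M : Matrix n n ℝ | M.PosSemidef} := by
  have := Fintype.ofFinite n
  simp only [posSemidef_iff_dotProduct_mulVec, ofPred_and, ofPred_forall]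
  refine (isClosed_eq continuous_id.matrix_conjTranspose continuous_id).inter
    (isClosed_iInter fun v => isClosed_le continuous_const ?_)
  exact continuous_const.dotProduct (continuous_id.matrix_mulVec continuous_const)

theorem isClosed_setOf_forall_posSemidef [Finite n] :
    IsClosed {x : ι → Matrix n n ℝ | ∀ i, (x i).PosSemidef} := by
  simp only [ofPred_forall]
  exact isClosed_iInter fun i =>
    isClosed_setOf_posSemidef.preimage (continuous_apply (A := fun _ => Matrix n n ℝ) i)

variable [Fintype n]

theorem abs_apply_le_trace {M : Matrix n n ℝ} (hM : M.PosSemidef) (a b : n) :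
    |M a b| ≤ M.trace := by
  classical
  have hdiag : ∀ c, M c c ≤ M.trace := fun c =>
    Finset.single_le_sum (f := fun c => M c c) (fun c _ => hM.diag_nonneg) (Finset.mem_univ c)
  have hsymm : M b a = M a b := by simpa using hM.1.apply a b
  have hadd := hM.dotProduct_mulVec_nonneg (Pi.single a 1 + Pi.single b 1)
  have hsub := hM.dotProduct_mulVec_nonneg (Pi.single a 1 - Pi.single b 1)
  simp only [star_trivial, mulVec_add, mulVec_sub, mulVec_single, MulOpposite.op_one, one_smul,
    dotProduct_add, dotProduct_sub, add_dotProduct, sub_dotProduct, single_dotProduct, col_apply,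
    one_mul, hsymm] at hadd hsub
  rw [abs_le]
  constructor <;> linarith [hdiag a, hdiag b]

/-- Congruence by `1 + h L` preserves positive semidefiniteness, and
`(1 + h L)ᵀ p (1 + h L) = p + h (Lᵀ p + p L) + h² Lᵀ p L`. -/
theorem isRightTangentAt_posSemidef [Fintype ι] {p q : ι → Matrix n n ℝ}
    (hp : ∀ i, (p i).PosSemidef) (hq : ∀ i, (q i).PosSemidef) (L : ι → Matrix n n ℝ) :
    IsRightTangentAt {x | ∀ i, (x i).PosSemidef} p
      (fun i => (L i)ᵀ * p i + p i * L i + q i) := by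
  classical
  set y : ι → Matrix n n ℝ := fun i => (L i)ᵀ * p i + p i * L i + q i with hy
  set w : ι → Matrix n n ℝ := fun i => (L i)ᵀ * p i * L i with hw
  refine ⟨fun h => p + h • y + h ^ 2 • w, by simp, fun h hh i => ?_, ?_⟩
  · have hcongr : (p + h • y + h ^ 2 • w) i = (1 + h • L i)ᴴ * p i * (1 + h • L i) + h • q i := by
      simp only [hy, hw, Pi.add_apply, Pi.smul_apply, conjTranspose_eq_transpose_of_trivial,
        transpose_add, transpose_one, transpose_smul, Matrix.add_mul, Matrix.mul_add,
        Matrix.one_mul, Matrix.mul_one, Matrix.smul_mul, Matrix.mul_smul]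
      module
    change ((p + h • y + h ^ 2 • w) i).PosSemidef
    rw [hcongr]
    exact ((hp i).conjTranspose_mul_mul_same _).add ((hq i).smul hh)
  · exact (hasDerivAt_add_smul_add_sq_smul p y w).hasDerivWithinAt

variable [Fintype ι]

/-- The sum of the traces of a tuple of matrices. On the positive semidefinite cone it dominates
the norm, so it serves as the functional that excludes blow-up. -/
def totalTrace : (ι → Matrix n n ℝ) →ₗ[ℝ] ℝ :=
  ∑ i, traceLinearMap n ℝ ℝ ∘ₗ LinearMap.proj i

theorem totalTrace_apply (x : ι → Matrix n n ℝ) : totalTrace x = ∑ i, (x i).trace := by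
  simp [totalTrace]

theorem totalTrace_nonneg {x : ι → Matrix n n ℝ} (hx : ∀ i, (x i).PosSemidef) :
    0 ≤ totalTrace x := by
  rw [totalTrace_apply]
  exact Finset.sum_nonneg fun i _ => (hx i).trace_nonneg

theorem norm_le_totalTrace {x : ι → Matrix n n ℝ} (hx : ∀ i, (x i).PosSemidef) :
    ‖x‖ ≤ totalTrace x := by
  have hnonneg := totalTrace_nonneg hx
  refine (pi_norm_le_iff_of_nonneg hnonneg).2 fun i => (Matrix.norm_le_iff hnonneg).2 fun a b => ?_
  rw [totalTrace_apply]
  exact (abs_apply_le_trace (hx i) a b).trans <|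
    Finset.single_le_sum (f := fun i => (x i).trace) (fun i _ => (hx i).trace_nonneg)
      (Finset.mem_univ i)

end Matrix

section Riccati

variable {d l N : ℕ} {A C Q : Fin N → Matrix (Fin d) (Fin d) ℝ}
  {B : Fin N → Matrix (Fin d) (Fin l) ℝ} {R : Fin N → Matrix (Fin l) (Fin l) ℝ}
  {m : Fin N → Fin N → ℝ} {T : ℝ} {P : Fin N → Matrix (Fin d) (Fin d) ℝ}

theorem contDiff_riccatiRHS : ContDiff ℝ 1 (riccatiRHS A C B Q R m) := by
  have : ∀ i a b, ContDiff ℝ 1 fun K : Fin N → Matrix (Fin d) (Fin d) ℝ => K i a b :=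
    fun i a b => (contDiff_apply_apply ℝ ℝ a b).comp (contDiff_apply ℝ (Fin d → Fin d → ℝ) i)
  refine contDiff_pi.2 fun i => contDiff_pi.2 fun a => contDiff_pi.2 fun b => ?_
  simp only [riccatiRHS, Matrix.add_apply, Matrix.sub_apply, Matrix.mul_apply, Matrix.sum_apply,
    Matrix.smul_apply, smul_eq_mul]
  fun_prop

/-- The matrix `D` for which the terms of `riccatiRHS` that need not be positive semidefinite,
namely those in `A`, `R⁻¹` and `m i i`, take the form `Dᵀ x + x D`. -/
def riccatiDrift (A : Fin N → Matrix (Fin d) (Fin d) ℝ) (B : Fin N → Matrix (Fin d) (Fin l) ℝ)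
    (R : Fin N → Matrix (Fin l) (Fin l) ℝ) (m : Fin N → Fin N → ℝ)
    (x : Fin N → Matrix (Fin d) (Fin d) ℝ) (i : Fin N) : Matrix (Fin d) (Fin d) ℝ :=
  A i - (1 / 2 : ℝ) • (B i * (R i)⁻¹ * (B i)ᵀ * x i) + (m i i / 2) • 1

theorem riccatiRHS_eq_riccatiDrift (x : Fin N → Matrix (Fin d) (Fin d) ℝ) {i : Fin N}
    (hR : (R i).IsSymm) (hx : (x i).IsSymm) :
    riccatiRHS A C B Q R m x i =
      (riccatiDrift A B R m x i)ᵀ * x i + x i * riccatiDrift A B R m x i +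
        ((C i)ᵀ * x i * C i + Q i + ∑ j ∈ Finset.univ.erase i, m i j • x j) := by
  rw [riccatiRHS, ← Finset.add_sum_erase _ _ (Finset.mem_univ i)]
  simp only [riccatiDrift, transpose_add, transpose_sub, transpose_smul, transpose_mul,
    transpose_one, transpose_transpose, transpose_nonsing_inv, hR.eq, hx.eq, Matrix.add_mul,
    Matrix.sub_mul, Matrix.mul_add, Matrix.mul_sub, Matrix.smul_mul, Matrix.mul_smul,
    Matrix.one_mul, Matrix.mul_one, Matrix.mul_assoc]
  module

theorem isRightTangentAt_riccatiRHS (hQ : ∀ i, (Q i).PosSemidef) (hR : ∀ i, (R i).IsSymm)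
    (hm : ∀ i j, i ≠ j → 0 ≤ m i j) {x : Fin N → Matrix (Fin d) (Fin d) ℝ}
    (hx : ∀ i, (x i).PosSemidef) :
    IsRightTangentAt {x | ∀ i, (x i).PosSemidef} x (riccatiRHS A C B Q R m x) := by
  have hsource : ∀ i, ((C i)ᵀ * x i * C i + Q i +
      ∑ j ∈ Finset.univ.erase i, m i j • x j).PosSemidef := fun i =>
    (((hx i).conjTranspose_mul_mul_same (C i)).add (hQ i)).add <|
      posSemidef_sum _ fun j hj => (hx j).smul (hm i j (Finset.ne_of_mem_erase hj).symm)
  convert isRightTangentAt_posSemidef hx hsource (riccatiDrift A B R m x) using 2 with i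
  exact riccatiRHS_eq_riccatiDrift x (hR i) (isHermitian_iff_isSymm.1 (hx i).1)

/-- The part of `riccatiRHS` that is linear in the unknown. -/
def riccatiLinearPart (A C : Fin N → Matrix (Fin d) (Fin d) ℝ) (m : Fin N → Fin N → ℝ) :
    (Fin N → Matrix (Fin d) (Fin d) ℝ) →ₗ[ℝ] Fin N → Matrix (Fin d) (Fin d) ℝ where
  toFun x i := (C i)ᵀ * x i * C i + (A i)ᵀ * x i + x i * A i + ∑ j, m i j • x j
  map_add' x y := by
    ext1 i
    simp only [Pi.add_apply, Matrix.mul_add, Matrix.add_mul, smul_add, Finset.sum_add_distrib]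
    abel
  map_smul' r x := by
    ext1 i
    simp only [Pi.smul_apply, Matrix.mul_smul, Matrix.smul_mul, smul_add, Finset.smul_sum,
      RingHom.id_apply, smul_comm r]

theorem totalTrace_riccatiRHS_le (hR : ∀ i, (R i).PosSemidef)
    {x : Fin N → Matrix (Fin d) (Fin d) ℝ} (hx : ∀ i, (x i).PosSemidef) :
    totalTrace (riccatiRHS A C B Q R m x) ≤
      totalTrace (riccatiLinearPart A C m x) + totalTrace Q := by
  have hquad : 0 ≤ totalTrace fun i => x i * B i * (R i)⁻¹ * (B i)ᵀ * x i := by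
    refine totalTrace_nonneg fun i => ?_
    have h := (hR i).inv.mul_mul_conjTranspose_same (x i * B i)
    simpa [(isHermitian_iff_isSymm.1 (hx i).1).eq, Matrix.mul_assoc] using h
  have hsplit : riccatiRHS A C B Q R m x =
      riccatiLinearPart A C m x - (fun i => x i * B i * (R i)⁻¹ * (B i)ᵀ * x i) + Q := by
    ext1 i
    simp only [riccatiRHS, riccatiLinearPart, LinearMap.coe_mk, AddHom.coe_mk, Pi.add_apply,
      Pi.sub_apply]
    abel
  rw [hsplit, map_add, map_sub]
  linarith

theorem exists_forall_totalTrace_riccatiRHS_le (hR : ∀ i, (R i).PosSemidef) :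
    ∃ k, 0 ≤ k ∧ ∀ x : Fin N → Matrix (Fin d) (Fin d) ℝ, (∀ i, (x i).PosSemidef) →
      totalTrace (riccatiRHS A C B Q R m x) ≤ k * totalTrace x + totalTrace Q := by
  let f := totalTrace ∘ₗ riccatiLinearPart A C m
  obtain ⟨k, hk, hf⟩ := SemilinearMapClass.bound_of_continuous f f.continuous_of_finiteDimensional
  refine ⟨k, hk.le, fun x hx => (totalTrace_riccatiRHS_le hR hx).trans ?_⟩
  gcongr
  calc totalTrace (riccatiLinearPart A C m x) ≤ ‖f x‖ := le_abs_self _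
    _ ≤ k * ‖x‖ := hf x
    _ ≤ k * totalTrace x := by gcongr; exact norm_le_totalTrace hx

theorem exists_isRiccatiSolution_posSemidef (hT : 0 ≤ T) (hQ : ∀ i, (Q i).PosSemidef)
    (hR : ∀ i, (R i).PosSemidef) (hP : ∀ i, (P i).PosSemidef)
    (hm : ∀ i j, i ≠ j → 0 ≤ m i j) :
    ∃ K, IsRiccatiSolution T A C B Q R m P K ∧ ∀ t ∈ Icc 0 T, ∀ i, (K t i).PosSemidef := by
  obtain ⟨k, hk, hgrowth⟩ :=
    exists_forall_totalTrace_riccatiRHS_le (A := A) (B := B) (C := C) (Q := Q) (m := m) hR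
  obtain ⟨x, hx₀, hpsd, hx⟩ := exists_hasDerivWithinAt_Icc_of_invariant contDiff_riccatiRHS
    isClosed_setOf_forall_posSemidef
    (fun _ => isRightTangentAt_riccatiRHS hQ (fun i => isHermitian_iff_isSymm.1 (hR i).1) hm)
    (fun _ => norm_le_totalTrace) hk (totalTrace_nonneg hQ) hgrowth hT hP
  have hmem : ∀ t ∈ Icc 0 T, T - t ∈ Icc 0 T := fun t ht =>
    ⟨sub_nonneg.2 ht.2, sub_le_self T ht.1⟩
  have hK : ∀ t ∈ Icc 0 T, ∀ i, (x (T - t) i).PosSemidef := fun t ht => hpsd _ (hmem t ht)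
  refine ⟨fun t => x (T - t), ⟨fun t ht i => isHermitian_iff_isSymm.1 (hK t ht i).1,
    fun t ht => hasDerivWithinAt_pi.1 ?_, fun i => ?_⟩, hK⟩
  · have hrev := hasDerivWithinAt_comp_const_sub (hx _ (hmem t ht))
    rwa [preimage_const_sub_Icc, sub_self, sub_zero] at hrev
  · simp [hx₀]

theorem IsRiccatiSolution.eqOn {K K' : ℝ → Fin N → Matrix (Fin d) (Fin d) ℝ}
    (hK : IsRiccatiSolution T A C B Q R m P K) (hK' : IsRiccatiSolution T A C B Q R m P K') :
    EqOn K K' (Icc 0 T) :=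
  eqOn_Icc_of_hasDerivWithinAt_of_eq_right contDiff_riccatiRHS.neg
    (fun t ht => hasDerivWithinAt_pi.2 (hK.2.1 t ht))
    (fun t ht => hasDerivWithinAt_pi.2 (hK'.2.1 t ht))
    (funext fun i => (hK.2.2 i).trans (hK'.2.2 i).symm)

end Riccati

theorem riccati_existsUnique_general {d l N : ℕ} {T : ℝ} (hT : 0 ≤ T)
    (A C Q P : Fin N → Matrix (Fin d) (Fin d) ℝ)
    (B : Fin N → Matrix (Fin d) (Fin l) ℝ)
    (R : Fin N → Matrix (Fin l) (Fin l) ℝ)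
    (m : Fin N → Fin N → ℝ)
    (hQ : ∀ i, (Q i).PosSemidef) (hR : ∀ i, (R i).PosDef) (hP : ∀ i, (P i).PosSemidef)
    (hm : ∀ i j, i ≠ j → 0 ≤ m i j) :
    (∃ K : ℝ → Fin N → Matrix (Fin d) (Fin d) ℝ,
        IsRiccatiSolution T A C B Q R m P K ∧ ∀ t ∈ Icc 0 T, ∀ i, (K t i).PosSemidef) ∧
    (∀ K K' : ℝ → Fin N → Matrix (Fin d) (Fin d) ℝ,
        IsRiccatiSolution T A C B Q R m P K →
        IsRiccatiSolution T A C B Q R m P K' →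
        ∀ t ∈ Icc (0 : ℝ) T, ∀ i, K t i = K' t i) :=
  ⟨exists_isRiccatiSolution_posSemidef hT hQ (fun i => (hR i).posSemidef) hP hm,
    fun _ _ hK hK' _ ht i => congrFun (hK.eqOn hK' ht) i⟩

/-- Existence and uniqueness for the coupled Riccati system. -/
theorem riccati_existsUnique
    (d l N : ℕ) (hd : 0 < d) (hl : 0 < l) (hN : 0 < N)
    (T : ℝ) (hT : 0 < T)
    (A C Q P : Fin N → Matrix (Fin d) (Fin d) ℝ)
    (B : Fin N → Matrix (Fin d) (Fin l) ℝ)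
    (R : Fin N → Matrix (Fin l) (Fin l) ℝ)
    (m : Fin N → Fin N → ℝ)
    (hQ : ∀ i, (Q i).PosSemidef)
    (hR : ∀ i, (R i).PosDef)
    (hP : ∀ i, (P i).PosDef)
    (hm₁ : ∀ i j, i ≠ j → 0 ≤ m i j)
    (hm₂ : ∀ i, ∑ j, m i j = 0) :
    (∃ K : ℝ → Fin N → Matrix (Fin d) (Fin d) ℝ,
        IsRiccatiSolution T A C B Q R m P K) ∧
    (∀ K K' : ℝ → Fin N → Matrix (Fin d) (Fin d) ℝ,
        IsRiccatiSolution T A C B Q R m P K →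
        IsRiccatiSolution T A C B Q R m P K' →
        ∀ t ∈ Icc (0:ℝ) T, ∀ i, K t i = K' t i) := by
  obtain ⟨⟨K, hK, -⟩, huniq⟩ :=
    riccati_existsUnique_general hT.le A C Q P B R m hQ hR (fun i => (hP i).posSemidef) hm₁
  exact ⟨⟨K, hK⟩, huniq⟩
end
end

section
/- Uniform Lipschitz continuity in time of the Riccati solutions: let (A_n, B_n, C_n, Q_n, R_n, m^n), n ∈ ℕ, be coefficient data all having the same terminal matrices P(i), and assume the uniform bounds sup_n max_{i∈S} (‖A_n(i)‖ + ‖B_n(i)‖ + ‖C_n(i)‖ + ‖Q_n(i)‖) < ∞, sup_n max_{i,j∈S} |m^n_{ij}| < ∞, and that there exists δ > 0 such that R_n(i) ⪰ δ I for all n ∈ ℕ and i ∈ S. Let K_n solve the coupled Riccati system associated with the n-th datum. Then there exists a constant k₁ > 0, independent of n and i, such that ‖K_n(t,i) − K_n(s,i)‖ ≤ k₁ |t − s| for all s, t ∈ [0,T], all n ∈ ℕ, and all i ∈ S; in particular each map t ↦ K_n(t,i) is Lipschitz continuous on [0,T] uniformly in i and n. -/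
open Matrix Set Filter Topology

attribute [local instance] Matrix.normedAddCommGroup Matrix.normedSpace

noncomputable section

/-!
Order symmetric matrices by `⪯`, the Loewner order. Let `L` be a coupled Lyapunov operator with
nonnegative switching rates. If `G T ⪰ 0` and `-Ġ ⪰ L G`, then `G ⪰ 0` on `[0, T]`: add to `G` a
small multiple of `exp (-(c + 1) t) • 1` with `L 1 ⪯ c • 1`. If the sum were not positive
definite throughout, then at the last time at which some component has a null vector `x`, the
quadratic form of that component at `x` would have negative derivative, although it vanishes there
and is positive just afterwards.

The Riccati equation is a Lyapunov equation for the closed-loop drift `A - B R⁻¹ Bᵀ K` with source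
`K B R⁻¹ Bᵀ K + Q ⪰ 0`, whence `K ⪰ 0`. It is also a Lyapunov equation for the drift `A` with source
`Q - K B R⁻¹ Bᵀ K ⪯ Q`, whence `K ⪯ φ • 1` for an explicit exponential `φ`. The two bounds make the
Riccati right-hand side bounded uniformly in the datum, and the mean value inequality concludes.
-/

open scoped MatrixOrder

section Calculus

theorem exists_last_notMem_of_isOpen {X : Type*} [TopologicalSpace X] {f : ℝ → X} {U : Set X}
    {a b t₁ : ℝ} (hf : ContinuousOn f (Icc a b)) (hU : IsOpen U) (hb : f b ∈ U)
    (ht₁ : t₁ ∈ Icc a b) (hft₁ : f t₁ ∉ U) :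
    ∃ t ∈ Ico a b, f t ∉ U ∧ ∀ s ∈ Ioc t b, f s ∈ U := by
  have hcompact : IsCompact (Icc a b ∩ f ⁻¹' Uᶜ) :=
    isCompact_Icc.of_isClosed_subset
      (hf.preimage_isClosed_of_isClosed isClosed_Icc hU.isClosed_compl) inter_subset_left
  obtain ⟨t, ⟨ht, hft⟩, hmax⟩ := hcompact.exists_isGreatest ⟨t₁, ht₁, hft₁⟩
  refine ⟨t, ⟨ht.1, ht.2.lt_of_ne (by rintro rfl; exact hft hb)⟩, hft, fun s hs => ?_⟩
  by_contra hfs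
  exact hs.1.not_ge (hmax ⟨⟨ht.1.trans hs.1.le, hs.2⟩, hfs⟩)

theorem hasDerivWithinAt_nonneg_of_forall_le {f : ℝ → ℝ} {f' a b : ℝ} (hab : a < b)
    (hf : HasDerivWithinAt f f' (Icc a b) a) (hmin : ∀ s ∈ Ioc a b, f a ≤ f s) : 0 ≤ f' := by
  have hlocal : IsLocalMinOn f (Icc a b) a := by
    refine eventually_nhdsWithin_of_forall fun s hs => ?_
    rcases hs.1.eq_or_lt with rfl | has
    exacts [le_rfl, hmin s ⟨has, hs.2⟩]
  have hcone : b - a ∈ posTangentConeAt (Icc a b) a :=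
    sub_mem_posTangentConeAt_of_segment_subset (segment_eq_Icc hab.le).subset
  have hslope : 0 ≤ (b - a) * f' := by
    simpa using hlocal.hasFDerivWithinAt_nonneg hf.hasFDerivWithinAt hcone
  exact nonneg_of_mul_nonneg_right hslope (sub_pos.2 hab)

theorem hasDerivAt_const_mul_exp_mul_sub (a c r t : ℝ) :
    HasDerivAt (fun s => a * Real.exp (c * (r - s))) (-(c * (a * Real.exp (c * (r - t))))) t := by
  have h : HasDerivAt (fun s => c * (r - s)) (c * -1) t :=
    ((hasDerivAt_id t).const_sub r).const_mul c
  exact (h.exp.const_mul a).congr_deriv (by ring)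

theorem hasDerivWithinAt_dotProduct_mulVec {n : Type*} [Fintype n] {F : ℝ → Matrix n n ℝ}
    {F' : Matrix n n ℝ} {s : Set ℝ} {t : ℝ} (hF : HasDerivWithinAt F F' s t) (x : n → ℝ) :
    HasDerivWithinAt (fun r => x ⬝ᵥ F r *ᵥ x) (x ⬝ᵥ F' *ᵥ x) s t := by
  have hentry : ∀ i j, HasDerivWithinAt (fun r => F r i j) (F' i j) s t := fun i j =>
    hasDerivWithinAt_pi.1 (hasDerivWithinAt_pi.1 hF i) j
  simp only [dotProduct, mulVec]
  exact HasDerivWithinAt.fun_sum fun i _ => HasDerivWithinAt.const_mul _ <|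
    HasDerivWithinAt.fun_sum fun j _ => (hentry i j).mul_const _

end Calculus

section LoewnerOrder

theorem posDef_of_smul_one_le {n : Type*} [DecidableEq n] {R : Matrix n n ℝ} {δ : ℝ}
    (hδ : 0 < δ) (hR : δ • 1 ≤ R) : R.PosDef := by
  simpa using (PosDef.one.smul hδ).add_posSemidef hR

theorem isSymm_of_matrix_nonneg {n : Type*} {M : Matrix n n ℝ} (hM : 0 ≤ M) : M.IsSymm :=
  isHermitian_iff_isSymm.1 (nonneg_iff_posSemidef.1 hM).isHermitian

variable {n : Type*} [Fintype n]

theorem nonneg_iff_isSymm_and_dotProduct_mulVec_nonneg {M : Matrix n n ℝ} :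
    0 ≤ M ↔ M.IsSymm ∧ ∀ x, 0 ≤ x ⬝ᵥ M *ᵥ x := by
  simp [nonneg_iff_posSemidef, posSemidef_iff_dotProduct_mulVec]

theorem dotProduct_mulVec_le_of_le {L M : Matrix n n ℝ} (h : L ≤ M) (x : n → ℝ) :
    x ⬝ᵥ L *ᵥ x ≤ x ⬝ᵥ M *ᵥ x := by
  simpa [sub_mulVec] using h.dotProduct_mulVec_nonneg x

theorem nonneg_of_isSymm_of_forall_dotProduct_mulVec_pos {M : Matrix n n ℝ} (hsymm : M.IsSymm)
    (hpos : ∀ x ≠ 0, 0 < x ⬝ᵥ M *ᵥ x) : 0 ≤ M := by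
  refine nonneg_iff_isSymm_and_dotProduct_mulVec_nonneg.2 ⟨hsymm, fun x => ?_⟩
  rcases eq_or_ne x 0 with rfl | hx
  exacts [by simp, (hpos x hx).le]

theorem isClosed_setOf_matrix_nonneg {n : Type*} [Finite n] :
    IsClosed {M : Matrix n n ℝ | 0 ≤ M} := by
  cases nonempty_fintype n
  simp only [nonneg_iff_isSymm_and_dotProduct_mulVec_nonneg, ofPred_and, ofPred_forall, IsSymm]
  exact (isClosed_eq (by fun_prop) continuous_id).inter
    (isClosed_iInter fun x => isClosed_le continuous_const (by fun_prop))

theorem matrix_nonneg_left_of_nonneg_on_Ioc {n : Type*} [Finite n] {F : ℝ → Matrix n n ℝ} {a b : ℝ}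
    (hab : a < b) (hF : ContinuousWithinAt F (Ioc a b) a)
    (hnonneg : ∀ t ∈ Ioc a b, 0 ≤ F t) : 0 ≤ F a := by
  have ha : a ∈ closure (Ioc a b) := closure_Ioc hab.ne ▸ left_mem_Icc.2 hab.le
  exact isClosed_setOf_matrix_nonneg.closure_subset (hF.mem_closure ha hnonneg)

theorem nonneg_of_forall_pos_nonneg_add_smul_one {n : Type*} [Finite n] [DecidableEq n]
    {M : Matrix n n ℝ} (h : ∀ ε : ℝ, 0 < ε → 0 ≤ M + ε • 1) : 0 ≤ M := by
  have hlim : Tendsto (fun ε : ℝ => M + ε • (1 : Matrix n n ℝ)) (𝓝[>] 0) (𝓝 M) := by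
    have hcont : Continuous fun ε : ℝ => M + ε • (1 : Matrix n n ℝ) := by fun_prop
    simpa using (hcont.tendsto 0).mono_left nhdsWithin_le_nhds
  exact isClosed_setOf_matrix_nonneg.mem_of_tendsto hlim (eventually_nhdsWithin_of_forall h)

theorem isOpen_setOf_forall_dotProduct_mulVec_pos :
    IsOpen {M : Matrix n n ℝ | ∀ x ≠ 0, 0 < x ⬝ᵥ M *ᵥ x} := by
  refine isOpen_iff_eventually.2 fun M hM => ?_
  have hsphere : ∀ᶠ L in 𝓝 M, ∀ x ∈ Metric.sphere (0 : n → ℝ) 1, 0 < x ⬝ᵥ L *ᵥ x := by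
    refine (isCompact_sphere _ _).eventually_forall_of_forall_eventually fun x hx => ?_
    have hcont : Continuous fun p : Matrix n n ℝ × (n → ℝ) => p.2 ⬝ᵥ p.1 *ᵥ p.2 := by fun_prop
    exact hcont.continuousAt.eventually_const_lt (hM x (ne_zero_of_mem_unit_sphere ⟨x, hx⟩))
  filter_upwards [hsphere] with L hL x hx
  have hnormed := hL (‖x‖⁻¹ • x) (by simp [norm_smul, hx])
  simp only [mulVec_smul, dotProduct_smul, smul_dotProduct, smul_eq_mul] at hnormed
  have hnorm : 0 ≤ ‖x‖⁻¹ := by positivity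
  exact pos_of_mul_pos_right (pos_of_mul_pos_right hnormed hnorm) hnorm

variable [DecidableEq n]

theorem mul_mul_inv_mul_transpose_mul_nonneg {k : Type*} [Fintype k] {K : Matrix k k ℝ}
    {B : Matrix k n ℝ} {R : Matrix n n ℝ} (hK : K.IsSymm) (hR : R.PosDef) :
    0 ≤ K * B * R⁻¹ * Bᵀ * K := by
  have h := (hR.inv.posSemidef.mul_mul_conjTranspose_same (K * B)).nonneg
  rwa [conjTranspose_eq_transpose_of_trivial, transpose_mul, hK.eq, ← Matrix.mul_assoc] at h

theorem inv_le_inv_smul_one_of_smul_one_le {R : Matrix n n ℝ} {δ : ℝ} (hδ : 0 < δ)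
    (hR : δ • 1 ≤ R) : R⁻¹ ≤ δ⁻¹ • 1 := by
  have hpd := posDef_of_smul_one_le hδ hR
  have hinv : R * R⁻¹ = 1 := mul_nonsing_inv R ((isUnit_iff_isUnit_det R).1 hpd.isUnit)
  have hsymm : (R⁻¹)ᴴ = R⁻¹ := hpd.inv.isHermitian
  set D : Matrix n n ℝ := δ⁻¹ • 1 - R⁻¹ with hD
  have hDsymm : Dᴴ = D := by
    rw [hD, conjTranspose_sub, hsymm, conjTranspose_smul, conjTranspose_one, star_trivial]
  have hshift : 0 ≤ R⁻¹ * (R - δ • 1) * R⁻¹ := by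
    simpa only [hsymm] using (hR.conjTranspose_mul_mul_same R⁻¹).nonneg
  have hsq : 0 ≤ D * D := by
    simpa only [hDsymm] using (posSemidef_conjTranspose_mul_self D).nonneg
  have hsplit : D = R⁻¹ * (R - δ • 1) * R⁻¹ + δ • (D * D) := by
    simp only [hD, mul_sub, sub_mul, mul_assoc, hinv, smul_sub, smul_smul, smul_mul_assoc,
      mul_smul_comm, one_mul, mul_one]
    match_scalars <;> field_simp <;> ring
  have hDnonneg : 0 ≤ D := by
    rw [hsplit]
    exact add_nonneg hshift (smul_nonneg hδ.le hsq)
  exact sub_nonneg.1 hDnonneg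

end LoewnerOrder

section EntrywiseSupNorm

variable {l m n : Type*} [Fintype l] [Fintype m] [Fintype n]

theorem norm_matrix_mul_le_of_le {L : Matrix l m ℝ} {M : Matrix m n ℝ} {u v : ℝ}
    (hL : ‖L‖ ≤ u) (hM : ‖M‖ ≤ v) : ‖L * M‖ ≤ Fintype.card m * u * v := by
  have hu : 0 ≤ u := (norm_nonneg _).trans hL
  have hv : 0 ≤ v := (norm_nonneg _).trans hM
  refine (norm_le_iff (by positivity)).2 fun i j => ?_
  calc ‖(L * M) i j‖ ≤ ∑ k, ‖L i k * M k j‖ := norm_sum_le _ _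
    _ ≤ ∑ _k : m, u * v := by
      gcongr with k
      rw [norm_mul]
      gcongr
      exacts [(norm_entry_le_entrywise_sup_norm L).trans hL,
        (norm_entry_le_entrywise_sup_norm M).trans hM]
    _ = Fintype.card m * u * v := by simp [mul_assoc]

theorem norm_one_matrix_le [DecidableEq n] : ‖(1 : Matrix n n ℝ)‖ ≤ 1 := by
  refine (norm_le_iff zero_le_one).2 fun i j => ?_
  rw [one_apply]
  split_ifs <;> simp

theorem dotProduct_mulVec_le_of_norm_le {M : Matrix n n ℝ} {r : ℝ} (hM : ‖M‖ ≤ r)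
    (x : n → ℝ) : x ⬝ᵥ M *ᵥ x ≤ Fintype.card n * r * (x ⬝ᵥ x) := by
  have hr : 0 ≤ r := (norm_nonneg _).trans hM
  have hentry : ∀ i j, x i * (M i j * x j) ≤ r * (|x i| * |x j|) := fun i j =>
    calc x i * (M i j * x j) ≤ |M i j| * (|x i| * |x j|) := by
          rw [← abs_mul, ← abs_mul]
          exact (le_abs_self _).trans_eq (by ring_nf)
      _ ≤ r * (|x i| * |x j|) := by
          gcongr
          exact (norm_entry_le_entrywise_sup_norm M).trans hM
  calc x ⬝ᵥ M *ᵥ x = ∑ i, ∑ j, x i * (M i j * x j) := by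
        simp only [dotProduct, mulVec, Finset.mul_sum]
    _ ≤ ∑ i, ∑ j, r * (|x i| * |x j|) := by
        exact Finset.sum_le_sum fun i _ => Finset.sum_le_sum fun j _ => hentry i j
    _ = r * (∑ i, |x i|) ^ 2 := by
        rw [sq, Finset.sum_mul_sum]
        simp only [Finset.mul_sum]
    _ ≤ r * (Fintype.card n * ∑ i, |x i| ^ 2) := by
        gcongr
        exact sq_sum_le_card_mul_sum_sq
    _ = Fintype.card n * r * (x ⬝ᵥ x) := by
        simp only [sq_abs, dotProduct, ← sq]
        ring

theorem le_smul_one_of_norm_le [DecidableEq n] {M : Matrix n n ℝ} {r : ℝ} (hsymm : M.IsSymm)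
    (hM : ‖M‖ ≤ r) : M ≤ (Fintype.card n * r) • 1 := by
  refine sub_nonneg.1 (nonneg_iff_isSymm_and_dotProduct_mulVec_nonneg.2
    ⟨(isSymm_one.smul _).sub hsymm, fun x => ?_⟩)
  simpa [sub_mulVec, smul_mulVec] using dotProduct_mulVec_le_of_norm_le hM x

theorem norm_le_of_nonneg_of_le_smul_one [DecidableEq n] {M : Matrix n n ℝ} {r : ℝ} (hr : 0 ≤ r)
    (hM : 0 ≤ M) (hMr : M ≤ r • 1) : ‖M‖ ≤ r := by
  obtain ⟨hsymm, hform⟩ := nonneg_iff_isSymm_and_dotProduct_mulVec_nonneg.1 hM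
  have hdiag : ∀ i, M i i ≤ r := fun i => by simpa using hMr.diag_nonneg (i := i)
  refine (norm_le_iff hr).2 fun i j => ?_
  have hadd := hform (Pi.single i 1 + Pi.single j 1)
  have hsub := hform (Pi.single i 1 - Pi.single j 1)
  simp only [mulVec_add, mulVec_sub, dotProduct_add, add_dotProduct, dotProduct_sub,
    sub_dotProduct, mulVec_single_one, single_one_dotProduct, col_apply,
    hsymm.apply i j] at hadd hsub
  rw [Real.norm_eq_abs, abs_le]
  constructor <;> linarith [hdiag i, hdiag j]

theorem norm_inv_le_inv_of_smul_one_le [DecidableEq n] {R : Matrix n n ℝ} {δ : ℝ} (hδ : 0 < δ)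
    (hR : δ • 1 ≤ R) : ‖R⁻¹‖ ≤ δ⁻¹ :=
  norm_le_of_nonneg_of_le_smul_one (inv_nonneg.2 hδ.le)
    (posDef_of_smul_one_le hδ hR).inv.posSemidef.nonneg (inv_le_inv_smul_one_of_smul_one_le hδ hR)

end EntrywiseSupNorm

section LyapunovComparison

variable {n κ : Type*} [Fintype n] [Fintype κ]

/-- The coupled Lyapunov operator of a system with drift `A`, diffusion `C` and switching rates
`m`, that is, the linear part of the Riccati right-hand side. -/
def lyapunovOp (A C : κ → Matrix n n ℝ) (m : κ → κ → ℝ) :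
    (κ → Matrix n n ℝ) →ₗ[ℝ] κ → Matrix n n ℝ where
  toFun G i := (C i)ᵀ * G i * C i + (A i)ᵀ * G i + G i * A i + ∑ j, m i j • G j
  map_add' G H := by
    ext1 i
    simp only [Pi.add_apply, mul_add, add_mul, smul_add, Finset.sum_add_distrib]
    abel
  map_smul' r G := by
    ext1 i
    simp only [Pi.smul_apply, mul_smul_comm, smul_mul_assoc, smul_add, Finset.smul_sum,
      RingHom.id_apply, smul_comm r]

theorem lyapunovOp_apply (A C : κ → Matrix n n ℝ) (m : κ → κ → ℝ) (G : κ → Matrix n n ℝ) (i : κ) :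
    lyapunovOp A C m G i =
      (C i)ᵀ * G i * C i + (A i)ᵀ * G i + G i * A i + ∑ j, m i j • G j := rfl

theorem isSymm_lyapunovOp_one [DecidableEq n] (A C : κ → Matrix n n ℝ) (m : κ → κ → ℝ) (i : κ) :
    (lyapunovOp A C m 1 i).IsSymm := by
  simp only [IsSymm, lyapunovOp_apply, Pi.one_apply, mul_one, one_mul, transpose_add,
    transpose_mul, transpose_transpose, transpose_sum, transpose_smul, transpose_one]
  abel

theorem norm_lyapunovOp_apply_le {A C : κ → Matrix n n ℝ} {m : κ → κ → ℝ} {G : κ → Matrix n n ℝ}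
    {M μ g : ℝ} (hA : ∀ i, ‖A i‖ ≤ M) (hC : ∀ i, ‖C i‖ ≤ M) (hm : ∀ i j, |m i j| ≤ μ)
    (hG : ∀ i, ‖G i‖ ≤ g) (i : κ) :
    ‖lyapunovOp A C m G i‖ ≤
      ((Fintype.card n * M) ^ 2 + 2 * (Fintype.card n * M) + Fintype.card κ * μ) * g := by
  have hAt : ‖(A i)ᵀ‖ ≤ M := (norm_transpose _).trans_le (hA i)
  have hCt : ‖(C i)ᵀ‖ ≤ M := (norm_transpose _).trans_le (hC i)
  have hswitch : ‖∑ j, m i j • G j‖ ≤ Fintype.card κ * (μ * g) :=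
    calc ‖∑ j, m i j • G j‖ ≤ ∑ j, ‖m i j • G j‖ := norm_sum_le _ _
      _ ≤ ∑ _j : κ, μ * g := by
        gcongr with j
        rw [norm_smul]
        exact mul_le_mul (hm i j) (hG j) (norm_nonneg _) ((abs_nonneg _).trans (hm i j))
      _ = Fintype.card κ * (μ * g) := by simp
  rw [lyapunovOp_apply]
  refine (norm_add_le_of_le (norm_add_le_of_le (norm_add_le_of_le
    (norm_matrix_mul_le_of_le (norm_matrix_mul_le_of_le hCt (hG i)) (hC i))
    (norm_matrix_mul_le_of_le hAt (hG i))) (norm_matrix_mul_le_of_le (hG i) (hA i)))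
    hswitch).trans_eq ?_
  ring

theorem exists_forall_lyapunovOp_one_le_smul_one [DecidableEq n] {X : Type*} [TopologicalSpace X]
    {s : Set X} {A : X → κ → Matrix n n ℝ} (C : κ → Matrix n n ℝ) (m : κ → κ → ℝ)
    (hs : IsCompact s) (hA : ContinuousOn A s) :
    ∃ c : ℝ, ∀ t ∈ s, lyapunovOp (A t) C m 1 ≤ c • 1 := by
  have hcont : ContinuousOn (fun t => lyapunovOp (A t) C m 1) s := by
    have hop : Continuous fun D : κ → Matrix n n ℝ => lyapunovOp D C m 1 :=
      continuous_pi fun i => by simp only [lyapunovOp_apply]; fun_prop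
    exact hop.comp_continuousOn hA
  obtain ⟨b, hb⟩ := hs.exists_bound_of_continuousOn hcont
  exact ⟨Fintype.card n * b, fun t ht i =>
    le_smul_one_of_norm_le (isSymm_lyapunovOp_one _ _ _ i) ((norm_le_pi_norm _ i).trans (hb t ht))⟩

theorem dotProduct_lyapunovOp_mulVec_nonneg {A C : κ → Matrix n n ℝ} {m : κ → κ → ℝ}
    {G : κ → Matrix n n ℝ} {i : κ} {x : n → ℝ} (hm : ∀ j, i ≠ j → 0 ≤ m i j) (hG : 0 ≤ G)
    (hx : G i *ᵥ x = 0) : 0 ≤ x ⬝ᵥ lyapunovOp A C m G i *ᵥ x := by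
  have hform : ∀ j y, 0 ≤ y ⬝ᵥ G j *ᵥ y := fun j =>
    (nonneg_iff_isSymm_and_dotProduct_mulVec_nonneg.1 (hG j)).2
  have hleft : ∀ y, x ⬝ᵥ G i *ᵥ y = 0 := fun y => by
    have hsymm : (G i).IsSymm := isSymm_of_matrix_nonneg (hG i)
    rw [← hsymm.eq, dotProduct_transpose_mulVec, hx, dotProduct_zero]
  have hdiffusion : x ⬝ᵥ ((C i)ᵀ * G i * C i) *ᵥ x = (C i *ᵥ x) ⬝ᵥ G i *ᵥ (C i *ᵥ x) := by
    rw [← mulVec_mulVec, ← mulVec_mulVec, dotProduct_transpose_mulVec, dotProduct_comm]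
  have hswitch : 0 ≤ ∑ j, m i j * (x ⬝ᵥ G j *ᵥ x) := by
    refine Finset.sum_nonneg fun j _ => ?_
    rcases eq_or_ne i j with rfl | hij
    · simp [hx]
    · exact mul_nonneg (hm j hij) (hform j x)
  calc 0 ≤ (C i *ᵥ x) ⬝ᵥ G i *ᵥ (C i *ᵥ x) + ∑ j, m i j * (x ⬝ᵥ G j *ᵥ x) :=
        add_nonneg (hform i _) hswitch
    _ = x ⬝ᵥ lyapunovOp A C m G i *ᵥ x := by
        simp only [lyapunovOp_apply, add_mulVec, dotProduct_add, hdiffusion, sum_mulVec,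
          dotProduct_sum, smul_mulVec, dotProduct_smul, smul_eq_mul]
        simp [← mulVec_mulVec, hx, hleft]

theorem nonneg_of_backward_barrier {κ : Type*} [Finite κ] {a b : ℝ}
    {G G' : ℝ → κ → Matrix n n ℝ}
    (hsymm : ∀ t ∈ Icc a b, ∀ i, (G t i).IsSymm)
    (hderiv : ∀ t ∈ Icc a b, ∀ i, HasDerivWithinAt (fun s => G s i) (G' t i) (Icc a b) t)
    (hb : ∀ i, (G b i).PosDef)
    (htouch : ∀ t ∈ Icc a b, 0 ≤ G t → ∀ i, ∀ x ≠ 0, G t i *ᵥ x = 0 → x ⬝ᵥ G' t i *ᵥ x < 0) :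
    ∀ t ∈ Icc a b, 0 ≤ G t := by
  set U : Set (κ → Matrix n n ℝ) := univ.pi fun _ => {M | ∀ x ≠ 0, 0 < x ⬝ᵥ M *ᵥ x} with hU
  have hUopen : IsOpen U :=
    isOpen_set_pi finite_univ fun _ _ => isOpen_setOf_forall_dotProduct_mulVec_pos
  have hbU : G b ∈ U := fun i _ x hx => by simpa using (hb i).dotProduct_mulVec_pos hx
  have hcont : ContinuousOn G (Icc a b) :=
    continuousOn_pi.2 fun i t ht => (hderiv t ht i).continuousWithinAt
  have nonneg_of_mem : ∀ t ∈ Icc a b, G t ∈ U → 0 ≤ G t := fun t ht hGt i =>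
    nonneg_of_isSymm_of_forall_dotProduct_mulVec_pos (hsymm t ht i) (hGt i trivial)
  by_contra! hneg
  obtain ⟨t₁, ht₁, hGt₁⟩ := hneg
  obtain ⟨t, ht, htU, hafter⟩ := exists_last_notMem_of_isOpen hcont hUopen hbU ht₁
    fun h => hGt₁ (nonneg_of_mem t₁ ht₁ h)
  have htI : t ∈ Icc a b := Ico_subset_Icc_self ht
  have hsub : Icc t b ⊆ Icc a b := Icc_subset_Icc_left ht.1
  have hGt : 0 ≤ G t := fun i =>
    matrix_nonneg_left_of_nonneg_on_Ioc (F := fun s => G s i) ht.2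
      (continuousWithinAt_pi.1 ((hcont t htI).mono (Ioc_subset_Icc_self.trans hsub)) i)
      fun s hs => nonneg_of_mem s (hsub (Ioc_subset_Icc_self hs)) (hafter s hs) i
  obtain ⟨i, x, hx, hle⟩ : ∃ i, ∃ x ≠ 0, x ⬝ᵥ G t i *ᵥ x ≤ 0 := by simpa [hU] using htU
  have hzero : x ⬝ᵥ G t i *ᵥ x = 0 :=
    hle.antisymm ((nonneg_iff_isSymm_and_dotProduct_mulVec_nonneg.1 (hGt i)).2 x)
  have hnull : G t i *ᵥ x = 0 :=
    ((nonneg_iff_posSemidef.1 (hGt i)).dotProduct_mulVec_zero_iff x).1 (by simpa using hzero)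
  refine (htouch t htI hGt i x hx hnull).not_ge (hasDerivWithinAt_nonneg_of_forall_le ht.2
    (hasDerivWithinAt_dotProduct_mulVec ((hderiv t htI i).mono hsub) x) fun s hs => ?_)
  rw [hzero]
  exact (hafter s hs i trivial x hx).le

theorem nonneg_of_lyapunovOp_le_neg_deriv [DecidableEq n] {a b c : ℝ} {A C : ℝ → κ → Matrix n n ℝ}
    {m : ℝ → κ → κ → ℝ} {G G' : ℝ → κ → Matrix n n ℝ}
    (hm : ∀ t ∈ Icc a b, ∀ i j, i ≠ j → 0 ≤ m t i j)
    (hone : ∀ t ∈ Icc a b, lyapunovOp (A t) (C t) (m t) 1 ≤ c • 1)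
    (hsymm : ∀ t ∈ Icc a b, ∀ i, (G t i).IsSymm)
    (hderiv : ∀ t ∈ Icc a b, ∀ i, HasDerivWithinAt (fun s => G s i) (G' t i) (Icc a b) t)
    (hb : 0 ≤ G b) (hG : ∀ t ∈ Icc a b, lyapunovOp (A t) (C t) (m t) (G t) ≤ -G' t) :
    ∀ t ∈ Icc a b, 0 ≤ G t := by
  intro r hr i
  refine nonneg_of_forall_pos_nonneg_add_smul_one fun ε hε => ?_
  -- `η • 1` is a strict supersolution, since `η' = -(c + 1) η < -c η`.
  set η : ℝ → ℝ := fun t => ε * Real.exp ((c + 1) * (r - t)) with hη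
  have hηpos : ∀ t, 0 < η t := fun t => by positivity
  have hbarrier := nonneg_of_backward_barrier (G := fun t => G t + η t • 1)
    (G' := fun t => G' t + -((c + 1) * η t) • 1)
    (fun t ht i => (hsymm t ht i).add (isSymm_one.smul (η t)))
    (fun t ht i => (hderiv t ht i).add
      ((hasDerivAt_const_mul_exp_mul_sub ε (c + 1) r t).hasDerivWithinAt.smul_const _))
    (fun i => (PosDef.one.smul (hηpos b)).posSemidef_add (nonneg_iff_posSemidef.1 (hb i)))
    fun t ht hnonneg i x hx hnull => ?_
  · simpa [hη] using hbarrier r hr i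
  have hxx : 0 < x ⬝ᵥ x := by simpa using dotProduct_star_self_pos_iff.2 hx
  have htouch := dotProduct_lyapunovOp_mulVec_nonneg (A := A t) (C := C t) (hm t ht i) hnonneg hnull
  have hGx := dotProduct_mulVec_le_of_le (hG t ht i) x
  have honex := mul_le_mul_of_nonneg_left (dotProduct_mulVec_le_of_le (hone t ht i) x) (hηpos t).le
  have hpos := mul_pos (hηpos t) hxx
  simp only [map_add, map_smul, Pi.add_apply, Pi.smul_apply, Pi.neg_apply, Pi.one_apply, add_mulVec,
    neg_mulVec, smul_mulVec, one_mulVec, dotProduct_add, dotProduct_neg, dotProduct_smul,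
    smul_eq_mul] at htouch hGx honex ⊢
  linarith

end LyapunovComparison

section ClosedLoop

variable {n k κ : Type*} [Fintype n] [Fintype k] [DecidableEq k]

/-- The drift of the system with drift `A`, control matrix `B` and control cost `R` when it is
controlled by the linear feedback `-R⁻¹BᵀH`. -/
def closedLoopDrift (A : κ → Matrix n n ℝ) (B : κ → Matrix n k ℝ) (R : κ → Matrix k k ℝ)
    (H : κ → Matrix n n ℝ) (i : κ) : Matrix n n ℝ :=
  A i - B i * (R i)⁻¹ * (B i)ᵀ * H i

theorem continuous_closedLoopDrift {A : κ → Matrix n n ℝ} {B : κ → Matrix n k ℝ}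
    {R : κ → Matrix k k ℝ} : Continuous (closedLoopDrift A B R) :=
  continuous_pi fun i => by simp only [closedLoopDrift]; fun_prop

end ClosedLoop

section Riccati

variable {d l N : ℕ} {T : ℝ} {A C Q P : Fin N → Matrix (Fin d) (Fin d) ℝ}
  {B : Fin N → Matrix (Fin d) (Fin l) ℝ} {R : Fin N → Matrix (Fin l) (Fin l) ℝ}
  {m : Fin N → Fin N → ℝ} {K : ℝ → Fin N → Matrix (Fin d) (Fin d) ℝ}

theorem riccatiRHS_eq_lyapunovOp (H : Fin N → Matrix (Fin d) (Fin d) ℝ) (i : Fin N) :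
    riccatiRHS A C B Q R m H i =
      lyapunovOp A C m H i - H i * B i * (R i)⁻¹ * (B i)ᵀ * H i + Q i := by
  rw [riccatiRHS, lyapunovOp_apply]
  abel

theorem riccatiRHS_eq_lyapunovOp_closedLoopDrift {H : Fin N → Matrix (Fin d) (Fin d) ℝ} {i : Fin N}
    (hH : (H i).IsSymm) (hR : (R i).IsSymm) :
    riccatiRHS A C B Q R m H i =
      lyapunovOp (closedLoopDrift A B R H) C m H i
        + H i * B i * (R i)⁻¹ * (B i)ᵀ * H i + Q i := by
  have htranspose : (closedLoopDrift A B R H i)ᵀ = (A i)ᵀ - H i * B i * (R i)⁻¹ * (B i)ᵀ := by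
    simp only [closedLoopDrift, transpose_sub, transpose_mul, transpose_transpose,
      transpose_nonsing_inv, hH.eq, hR.eq, Matrix.mul_assoc]
  rw [riccatiRHS, lyapunovOp_apply, htranspose, closedLoopDrift, Matrix.sub_mul, Matrix.mul_sub]
  simp only [Matrix.mul_assoc]
  abel

theorem norm_riccatiRHS_le {H : Fin N → Matrix (Fin d) (Fin d) ℝ} {M μ ρ h : ℝ}
    (hA : ∀ i, ‖A i‖ ≤ M) (hB : ∀ i, ‖B i‖ ≤ M) (hC : ∀ i, ‖C i‖ ≤ M) (hQ : ∀ i, ‖Q i‖ ≤ M)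
    (hm : ∀ i j, |m i j| ≤ μ) (hR : ∀ i, ‖(R i)⁻¹‖ ≤ ρ) (hH : ∀ i, ‖H i‖ ≤ h) (i : Fin N) :
    ‖riccatiRHS A C B Q R m H i‖ ≤
      ((d * M) ^ 2 + 2 * (d * M) + N * μ) * h + (d * l * M * h) ^ 2 * ρ + M := by
  have hBt : ‖(B i)ᵀ‖ ≤ M := (norm_transpose _).trans_le (hB i)
  have hlinear := norm_lyapunovOp_apply_le hA hC hm hH i
  have hquadratic := norm_matrix_mul_le_of_le (norm_matrix_mul_le_of_le (norm_matrix_mul_le_of_le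
    (norm_matrix_mul_le_of_le (hH i) (hB i)) (hR i)) hBt) (hH i)
  rw [riccatiRHS_eq_lyapunovOp]
  refine (norm_add_le_of_le (norm_sub_le_of_le hlinear hquadratic) (hQ i)).trans_eq ?_
  simp only [Fintype.card_fin]
  ring

namespace IsRiccatiSolution

theorem continuousOn (hK : IsRiccatiSolution T A C B Q R m P K) : ContinuousOn K (Icc 0 T) :=
  continuousOn_pi.2 fun i t ht => (hK.2.1 t ht i).continuousWithinAt

theorem nonneg (hK : IsRiccatiSolution T A C B Q R m P K) (hm : ∀ i j, i ≠ j → 0 ≤ m i j)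
    (hR : ∀ i, (R i).PosDef) (hQ : 0 ≤ Q) (hP : 0 ≤ P) : ∀ t ∈ Icc 0 T, 0 ≤ K t := by
  have hcont : ContinuousOn (fun t => closedLoopDrift A B R (K t)) (Icc 0 T) :=
    continuous_closedLoopDrift.comp_continuousOn hK.continuousOn
  obtain ⟨c, hc⟩ := exists_forall_lyapunovOp_one_le_smul_one C m isCompact_Icc hcont
  refine nonneg_of_lyapunovOp_le_neg_deriv (fun _ _ => hm) hc hK.1 hK.2.1
    (hP.trans_eq (funext hK.2.2).symm) fun t ht i => ?_
  have hRsymm : (R i).IsSymm := isHermitian_iff_isSymm.1 (hR i).isHermitian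
  rw [Pi.neg_apply, neg_neg, riccatiRHS_eq_lyapunovOp_closedLoopDrift (hK.1 t ht i) hRsymm,
    add_assoc]
  exact le_add_of_nonneg_right
    (add_nonneg (mul_mul_inv_mul_transpose_mul_nonneg (hK.1 t ht i) (hR i)) (hQ i))

theorem le_smul_one (hK : IsRiccatiSolution T A C B Q R m P K) (hm : ∀ i j, i ≠ j → 0 ≤ m i j)
    (hR : ∀ i, (R i).PosDef) {a b : ℝ} (ha : 0 ≤ a) (hb : 0 ≤ b) (hQ : Q ≤ a • 1) (hP : P ≤ a • 1)
    (hone : lyapunovOp A C m 1 ≤ b • 1) :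
    ∀ t ∈ Icc 0 T, K t ≤ (a * Real.exp ((b + 1) * (T - t))) • 1 := by
  set φ : ℝ → ℝ := fun t => a * Real.exp ((b + 1) * (T - t)) with hφ
  have hφa : ∀ t ∈ Icc 0 T, a ≤ φ t := fun t ht =>
    le_mul_of_one_le_right ha
      (Real.one_le_exp (mul_nonneg (by positivity) (sub_nonneg.2 ht.2)))
  refine fun t ht => sub_nonneg.1 <| nonneg_of_lyapunovOp_le_neg_deriv
    (A := fun _ => A) (C := fun _ => C) (m := fun _ => m) (G := fun t => φ t • 1 - K t)
    (G' := fun t => -((b + 1) * φ t) • 1 - -riccatiRHS A C B Q R m (K t))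
    (fun _ _ => hm) (fun _ _ => hone)
    (fun t ht i => (isSymm_one.smul (φ t)).sub (hK.1 t ht i))
    (fun t ht i => ((hasDerivAt_const_mul_exp_mul_sub a (b + 1) T t).hasDerivWithinAt.smul_const
      1).sub (hK.2.1 t ht i)) ?_ (fun t ht i => ?_) t ht
  · have hKT : K T = P := funext hK.2.2
    simpa [hφ, hKT] using hP
  have hquadratic := mul_mul_inv_mul_transpose_mul_nonneg (B := B i) (hK.1 t ht i) (hR i)
  have hlinear : φ t • lyapunovOp A C m 1 i ≤ φ t • b • 1 :=
    smul_le_smul_of_nonneg_left (hone i) (ha.trans (hφa t ht))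
  have hsource : Q i ≤ φ t • 1 :=
    (hQ i).trans (smul_le_smul_of_nonneg_right (hφa t ht) zero_le_one)
  simp only [map_sub, map_smul, Pi.sub_apply, Pi.smul_apply, Pi.neg_apply, Pi.one_apply,
    riccatiRHS_eq_lyapunovOp]
  rw [← sub_nonneg] at hlinear hsource ⊢
  refine (add_nonneg (add_nonneg hlinear hsource) hquadratic).trans_eq ?_
  module

theorem norm_le (hK : IsRiccatiSolution T A C B Q R m P K) (hm : ∀ i j, i ≠ j → 0 ≤ m i j)
    (hR : ∀ i, (R i).PosDef) (hQ : 0 ≤ Q) (hP : 0 ≤ P) {a b : ℝ} (hQa : ∀ i, ‖Q i‖ ≤ a)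
    (hPa : ∀ i, ‖P i‖ ≤ a) (hone : ∀ i, ‖lyapunovOp A C m 1 i‖ ≤ b) {t : ℝ} (ht : t ∈ Icc 0 T)
    (i : Fin N) : ‖K t i‖ ≤ d * a * Real.exp ((d * b + 1) * T) := by
  have ha : 0 ≤ a := (norm_nonneg _).trans (hQa i)
  have hb : 0 ≤ b := (norm_nonneg _).trans (hone i)
  have hle_smul_one : ∀ {F : Fin N → Matrix (Fin d) (Fin d) ℝ} {r : ℝ}, (∀ i, (F i).IsSymm) →
      (∀ i, ‖F i‖ ≤ r) → F ≤ (d * r) • 1 := fun hsymm hF i => by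
    simpa using le_smul_one_of_norm_le (hsymm i) (hF i)
  have hle := hK.le_smul_one hm hR (by positivity) (by positivity)
    (hle_smul_one (fun i => isSymm_of_matrix_nonneg (hQ i)) hQa)
    (hle_smul_one (fun i => isSymm_of_matrix_nonneg (hP i)) hPa)
    (hle_smul_one (isSymm_lyapunovOp_one A C m) hone) t ht i
  calc ‖K t i‖ ≤ d * a * Real.exp ((d * b + 1) * (T - t)) :=
        norm_le_of_nonneg_of_le_smul_one (by positivity) (hK.nonneg hm hR hQ hP t ht i) hle
    _ ≤ d * a * Real.exp ((d * b + 1) * T) := by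
        gcongr
        exact sub_le_self T ht.1

theorem norm_sub_le (hK : IsRiccatiSolution T A C B Q R m P K) {k : ℝ} {i : Fin N}
    (hk : ∀ t ∈ Icc 0 T, ‖riccatiRHS A C B Q R m (K t) i‖ ≤ k) {s t : ℝ} (hs : s ∈ Icc 0 T)
    (ht : t ∈ Icc 0 T) : ‖K t i - K s i‖ ≤ k * |t - s| :=
  (convex_Icc 0 T).norm_image_sub_le_of_norm_hasDerivWithin_le (fun r hr => hK.2.1 r hr i)
    (fun r hr => (norm_neg _).trans_le (hk r hr)) hs ht

end IsRiccatiSolution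

end Riccati

theorem riccati_uniform_lipschitz_general {ι : Type*} {d l N : ℕ} {T : ℝ}
    {A C Q P : ι → Fin N → Matrix (Fin d) (Fin d) ℝ} {B : ι → Fin N → Matrix (Fin d) (Fin l) ℝ}
    {R : ι → Fin N → Matrix (Fin l) (Fin l) ℝ} {m : ι → Fin N → Fin N → ℝ}
    (hQ : ∀ n i, (Q n i).PosSemidef) (hP : ∀ n i, (P n i).PosSemidef)
    (hm : ∀ n i j, i ≠ j → 0 ≤ m n i j)
    (hbdd : ∃ M, ∀ n i, ‖A n i‖ + ‖B n i‖ + ‖C n i‖ + ‖Q n i‖ ≤ M)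
    (hPbdd : ∃ p, ∀ n i, ‖P n i‖ ≤ p) (hmbdd : ∃ μ, ∀ n i j, |m n i j| ≤ μ)
    (hδ : ∃ δ > (0 : ℝ), ∀ n i, (R n i - δ • (1 : Matrix (Fin l) (Fin l) ℝ)).PosSemidef)
    {K : ι → ℝ → Fin N → Matrix (Fin d) (Fin d) ℝ}
    (hK : ∀ n, IsRiccatiSolution T (A n) (C n) (B n) (Q n) (R n) (m n) (P n) (K n)) :
    ∃ k > (0 : ℝ), ∀ n i, ∀ s ∈ Icc (0 : ℝ) T, ∀ t ∈ Icc (0 : ℝ) T,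
      ‖K n t i - K n s i‖ ≤ k * |t - s| := by
  obtain ⟨M, hM⟩ := hbdd
  obtain ⟨p, hp⟩ := hPbdd
  obtain ⟨μ, hμ⟩ := hmbdd
  obtain ⟨δ, hδpos, hR⟩ := hδ
  have hMbound : ∀ n i, ‖A n i‖ ≤ M ∧ ‖B n i‖ ≤ M ∧ ‖C n i‖ ≤ M ∧ ‖Q n i‖ ≤ M := fun n i => by
    refine ⟨?_, ?_, ?_, ?_⟩ <;>
      linarith [hM n i, norm_nonneg (A n i), norm_nonneg (B n i), norm_nonneg (C n i),
        norm_nonneg (Q n i)]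
  choose hA hB hC hQM using hMbound
  have hRpos : ∀ n i, (R n i).PosDef := fun n i => posDef_of_smul_one_le hδpos (hR n i)
  obtain ⟨h, hh⟩ : ∃ h, ∀ n, ∀ t ∈ Icc 0 T, ∀ i, ‖K n t i‖ ≤ h :=
    ⟨_, fun n t ht => (hK n).norm_le (hm n) (hRpos n)
      (fun i => (hQ n i).nonneg) (fun i => (hP n i).nonneg)
      (fun i => (hQM n i).trans (le_max_left M p)) (fun i => (hp n i).trans (le_max_right M p))
      (norm_lyapunovOp_apply_le (hA n) (hC n) (hμ n) fun _ => norm_one_matrix_le) ht⟩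
  obtain ⟨k, hk⟩ : ∃ k, ∀ n i, ∀ t ∈ Icc 0 T,
      ‖riccatiRHS (A n) (C n) (B n) (Q n) (R n) (m n) (K n t) i‖ ≤ k :=
    ⟨_, fun n i t ht => norm_riccatiRHS_le (hA n) (hB n) (hC n) (hQM n) (hμ n)
      (fun i => norm_inv_le_inv_of_smul_one_le hδpos (hR n i)) (hh n t ht) i⟩
  exact ⟨max k 1, lt_max_of_lt_right one_pos, fun n i s hs t ht =>
    (hK n).norm_sub_le (fun r hr => (hk n i r hr).trans (le_max_left k 1)) hs ht⟩

/-- Uniform Lipschitz continuity in time of the Riccati solutions. -/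
theorem riccati_uniform_lipschitz
    (d l N : ℕ) (hd : 0 < d) (hl : 0 < l) (hN : 0 < N)
    (T : ℝ) (hT : 0 < T)
    (A C Q : ℕ → Fin N → Matrix (Fin d) (Fin d) ℝ)
    (B : ℕ → Fin N → Matrix (Fin d) (Fin l) ℝ)
    (R : ℕ → Fin N → Matrix (Fin l) (Fin l) ℝ)
    (m : ℕ → Fin N → Fin N → ℝ)
    (P : Fin N → Matrix (Fin d) (Fin d) ℝ)
    (hQ : ∀ n i, (Q n i).PosSemidef)
    (hR : ∀ n i, (R n i).PosDef)
    (hP : ∀ i, (P i).PosDef)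
    (hm₁ : ∀ n i j, i ≠ j → 0 ≤ m n i j)
    (hm₂ : ∀ n i, ∑ j, m n i j = 0)
    (hbdd : ∃ M : ℝ, ∀ n i, ‖A n i‖ + ‖B n i‖ + ‖C n i‖ + ‖Q n i‖ ≤ M)
    (hmbdd : ∃ M : ℝ, ∀ n i j, |m n i j| ≤ M)
    (hδ : ∃ δ > (0:ℝ), ∀ n i, (R n i - δ • (1 : Matrix (Fin l) (Fin l) ℝ)).PosSemidef)
    (K : ℕ → ℝ → Fin N → Matrix (Fin d) (Fin d) ℝ)
    (hK : ∀ n, IsRiccatiSolution T (A n) (C n) (B n) (Q n) (R n) (m n) P (K n)) :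
    ∃ k₁ > (0:ℝ), ∀ n, ∀ i, ∀ s ∈ Icc (0:ℝ) T, ∀ t ∈ Icc (0:ℝ) T,
      ‖K n t i - K n s i‖ ≤ k₁ * |t - s| :=
  riccati_uniform_lipschitz_general hQ (fun _ i => (hP i).posSemidef) hm₁ hbdd
    ⟨‖P‖, fun _ => norm_le_pi_norm P⟩ hmbdd hδ hK
end
end
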